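/- (Proposition 2.2.) For every ε ∈ (0,1): a triple (p,q,l) ∈ G × V × G solves the three-field problem if and only if l = 0, q ∈ A, and (p,q) solves the AP formulation. In particular the three-field problem admits a unique solution (p^ε, q^ε, 0) with (p^ε,q^ε) ∈ G × A the unique solution of the AP formulation. -/

import Mathlib

/-- A continuous, symmetric, positive semidefinite bilinear form on a real
inner-product space. -/
def IsCSPForm {V : Type*} [NormedAddCommGroup V] [InnerProductSpace ℝ V]
    (a : V →ₗ[ℝ] V →ₗ[ℝ] ℝ) : Prop :=
  (∀ x y : V, a x y = a y x) ∧ (∀ x : V, 0 ≤ a x x) ∧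
    (∃ C : ℝ, ∀ x y : V, |a x y| ≤ C * ‖x‖ * ‖y‖)

/-!
A null vector of a positive semidefinite form lies in its kernel, so `a∥` vanishes against `G`.
Testing the second equation of the three-field problem with `l ∈ G` and subtracting `ε` times the
first leaves `c(l, l) = 0`, so `l ∈ G ∩ A = 0`. Conversely, the first equation is exactly what
extends the second one from `A` to `V = G ⊕ A`.

For well-posedness, adding the two AP equations shows that they say precisely that `u = p + q`
solves `a∥(u, ξ) + ε a⊥(u, ξ) = ε ℓ(ξ)` for all `ξ ∈ V`. This form is coercive, so Lax–Milgram
gives a unique `u`, and `(p, q)` is its decomposition along `V = G ⊕ A`.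
-/

open LinearMap (BilinForm)

section Decomposition

variable {R M : Type*} [CommRing R] [AddCommGroup M] [Module R M]

/-- The two equations of the Asymptotic-Preserving formulation for `(p, q) ∈ G × A`, with `a`, `b`
the parallel and perpendicular forms. The memberships `p ∈ G` and `q ∈ A` are not included. -/
def IsAPSolution (a b : BilinForm R M) (ℓ : M →ₗ[R] R) (ε : R) (G A : Submodule R M) (p q : M) :
    Prop :=
  (∀ η ∈ G, b p η + b q η = ℓ η) ∧ ∀ ξ ∈ A, a q ξ + ε * b q ξ + ε * b p ξ = ε * ℓ ξ

/-- The three equations of the three-field problem, in which the constraint `q ∈ A` is imposed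
through the multiplier `l`. The memberships `p ∈ G` and `l ∈ G` are not included. -/
def IsThreeFieldSolution (a b c : BilinForm R M) (ℓ : M →ₗ[R] R) (ε : R) (G : Submodule R M)
    (p q l : M) : Prop :=
  (∀ η ∈ G, b p η + b q η = ℓ η) ∧
    (∀ ξ, a q ξ + ε * b q ξ + ε * b p ξ + c l ξ = ε * ℓ ξ) ∧ ∀ χ ∈ G, c q χ = 0

/-- The space `A = {φ | ∀ ψ ∈ G, c φ ψ = 0}`; `Submodule.orthogonalBilin` tests in the first
argument of its form, hence the flip. -/
def leftOrthogonal (c : BilinForm R M) (G : Submodule R M) : Submodule R M :=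
  G.orthogonalBilin (LinearMap.flip c)

variable {a b c : BilinForm R M} {ℓ : M →ₗ[R] R} {ε : R} {G A : Submodule R M} {p q l : M}

theorem isCompl_of_isProj {P : M →ₗ[R] M} (hP : LinearMap.IsProj G P)
    (hsub : ∀ x, x - P x ∈ A) (hzero : ∀ x ∈ A, P x = 0) : IsCompl G A := by
  have hker : A = LinearMap.ker P :=
    le_antisymm hzero fun x hx => by simpa [LinearMap.mem_ker.1 hx] using hsub x
  exact hker ▸ hP.isCompl

theorem IsAPSolution.apply_eq (h : IsAPSolution a b ℓ ε G A p q)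
    (hG : ∀ η ∈ G, ∀ x, a x η = 0) (hGA : Codisjoint G A) (ξ : M) :
    a q ξ + ε * b q ξ + ε * b p ξ = ε * ℓ ξ := by
  obtain ⟨η, hη, ζ, hζ, rfl⟩ := Submodule.mem_sup.1 (hGA.eq_top ▸ Submodule.mem_top : ξ ∈ G ⊔ A)
  simp only [map_add, hG η hη]
  linear_combination h.2 ζ hζ + ε * h.1 η hη

theorem isAPSolution_iff_apply_add_eq [NoZeroDivisors R] (hε : ε ≠ 0)
    (hGl : ∀ η ∈ G, ∀ x, a η x = 0) (hGr : ∀ η ∈ G, ∀ x, a x η = 0) (hGA : Codisjoint G A)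
    (hp : p ∈ G) :
    IsAPSolution a b ℓ ε G A p q ↔ (a + ε • b) (p + q) = ε • ℓ := by
  have hsum (ξ : M) : (a + ε • b) (p + q) ξ = a q ξ + ε * b q ξ + ε * b p ξ := by
    simp only [map_add, LinearMap.add_apply, LinearMap.smul_apply, smul_eq_mul, hGl p hp]
    ring
  refine ⟨fun h => LinearMap.ext fun ξ => (hsum ξ).trans (h.apply_eq hGr hGA ξ), fun h => ?_⟩
  have heq (ξ : M) : a q ξ + ε * b q ξ + ε * b p ξ = ε * ℓ ξ :=
    (hsum ξ).symm.trans (LinearMap.congr_fun h ξ)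
  refine ⟨fun η hη => mul_left_cancel₀ hε ?_, fun ξ _ => heq ξ⟩
  linear_combination heq η - hGr η hη q

theorem existsUnique_isAPSolution [NoZeroDivisors R] (hε : ε ≠ 0)
    (hGl : ∀ η ∈ G, ∀ x, a η x = 0) (hGr : ∀ η ∈ G, ∀ x, a x η = 0) (hGA : IsCompl G A)
    (hu : ∃! u, (a + ε • b) u = ε • ℓ) :
    ∃! s : M × M, s.1 ∈ G ∧ s.2 ∈ A ∧ IsAPSolution a b ℓ ε G A s.1 s.2 := by
  obtain ⟨u, hu, huniq⟩ := hu
  obtain ⟨⟨p, q⟩, rfl, hpq⟩ := Submodule.existsUnique_add_of_isCompl_prod hGA u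
  have hiff {x : M} (y : M) (hx : x ∈ G) :=
    isAPSolution_iff_apply_add_eq (b := b) (ℓ := ℓ) (q := y) hε hGl hGr hGA.codisjoint hx
  refine ⟨(p, q), ⟨p.2, q.2, (hiff _ p.2).2 hu⟩, ?_⟩
  rintro ⟨x, y⟩ ⟨hx, hy, hxy⟩
  obtain ⟨rfl, rfl⟩ := Prod.mk.inj (hpq (⟨x, hx⟩, ⟨y, hy⟩) (huniq _ ((hiff y hx).1 hxy)))
  rfl

theorem IsThreeFieldSolution.apply_multiplier_self (h : IsThreeFieldSolution a b c ℓ ε G p q l)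
    (hG : ∀ η ∈ G, ∀ x, a x η = 0) (hl : l ∈ G) : c l l = 0 := by
  linear_combination h.2.1 l - ε * h.1 l hl - hG l hl q

theorem isThreeFieldSolution_iff (hG : ∀ η ∈ G, ∀ x, a x η = 0)
    (hc : ∀ η ∈ G, c η η = 0 → η = 0) (hGA : Codisjoint G (leftOrthogonal c G)) (hl : l ∈ G) :
    IsThreeFieldSolution a b c ℓ ε G p q l ↔
      l = 0 ∧ q ∈ leftOrthogonal c G ∧ IsAPSolution a b ℓ ε G (leftOrthogonal c G) p q := by
  constructor
  · intro h
    obtain rfl : l = 0 := hc l hl (h.apply_multiplier_self hG hl)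
    exact ⟨rfl, h.2.2, h.1, fun ξ _ => by simpa using h.2.1 ξ⟩
  · rintro ⟨rfl, hq, h⟩
    exact ⟨h.1, fun ξ => by simpa using h.apply_eq hG hGA ξ, hq⟩

theorem existsUnique_isThreeFieldSolution (hG : ∀ η ∈ G, ∀ x, a x η = 0)
    (hc : ∀ η ∈ G, c η η = 0 → η = 0) (hGA : Codisjoint G (leftOrthogonal c G))
    (hAP : ∃! s : M × M, s.1 ∈ G ∧ s.2 ∈ leftOrthogonal c G ∧
      IsAPSolution a b ℓ ε G (leftOrthogonal c G) s.1 s.2) :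
    ∃! s : M × M × M, s.1 ∈ G ∧ s.2.2 ∈ G ∧
      IsThreeFieldSolution a b c ℓ ε G s.1 s.2.1 s.2.2 := by
  obtain ⟨⟨p, q⟩, ⟨hp, hq, h⟩, huniq⟩ := hAP
  refine ⟨(p, q, 0), ⟨hp, G.zero_mem, (isThreeFieldSolution_iff hG hc hGA G.zero_mem).2
    ⟨rfl, hq, h⟩⟩, ?_⟩
  rintro ⟨p', q', l'⟩ ⟨hp', hl', h'⟩
  obtain ⟨rfl, hq', hAP'⟩ := (isThreeFieldSolution_iff hG hc hGA hl').1 h'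
  obtain ⟨rfl, rfl⟩ := Prod.mk.inj (huniq (p', q') ⟨hp', hq', hAP'⟩)
  rfl

end Decomposition

section NullSpace

variable {R M : Type*} [CommRing R] [LinearOrder R] [IsStrictOrderedRing R] [AddCommGroup M]
  [Module R M] {a c : BilinForm R M} {G : Submodule R M}

/-- The space `G` of null vectors of a positive semidefinite form. It is the kernel of the form,
with the carrier replaced by `{x | a x x = 0}` so that membership unfolds to the null condition. -/
def nullSpace (a : BilinForm R M) (ha : a.IsPosSemidef) : Submodule R M :=
  (LinearMap.ker a).copy {x | a x x = 0} <|
    Set.ext fun _ =>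
      a.apply_apply_same_eq_zero_iff ha.nonneg (BilinForm.isSymm_iff.1 ha.isSymm)

theorem nullSpace_eq_ker (ha : a.IsPosSemidef) : nullSpace a ha = LinearMap.ker a :=
  Submodule.copy_eq _ _ _

theorem apply_eq_zero_of_mem_nullSpace (ha : a.IsPosSemidef) {x : M} (hx : x ∈ nullSpace a ha)
    (y : M) : a x y = 0 :=
  LinearMap.congr_fun (nullSpace_eq_ker ha ▸ hx : x ∈ LinearMap.ker a) y

theorem apply_eq_zero_of_mem_nullSpace_right (ha : a.IsPosSemidef) {x : M}
    (hx : x ∈ nullSpace a ha) (y : M) : a y x = 0 :=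
  (ha.isSymm.eq x y).symm.trans (apply_eq_zero_of_mem_nullSpace ha hx y)

theorem eq_zero_of_disjoint_leftOrthogonal (hc : c.IsPosSemidef)
    (hG : Disjoint G (leftOrthogonal c G)) {x : M} (hx : x ∈ G) (hcx : c x x = 0) : x = 0 :=
  Submodule.disjoint_def.1 hG x hx fun y _ => apply_eq_zero_of_mem_nullSpace hc hcx y

end NullSpace

section LaxMilgram

variable {V : Type*} [NormedAddCommGroup V] [InnerProductSpace ℝ V]

theorem existsUnique_apply_eq_of_isCoercive [CompleteSpace V] {B : V →L[ℝ] V →L[ℝ] ℝ}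
    (hB : IsCoercive B) (f : V →L[ℝ] ℝ) : ∃! u, B u = f := by
  have hbij : Function.Bijective fun u =>
      InnerProductSpace.toDual ℝ V (hB.continuousLinearEquivOfBilin u) :=
    (InnerProductSpace.toDual ℝ V).bijective.comp hB.continuousLinearEquivOfBilin.bijective
  have hrep (u : V) : InnerProductSpace.toDual ℝ V (hB.continuousLinearEquivOfBilin u) = B u :=
    ContinuousLinearMap.ext fun v => by simp
  simpa only [hrep] using hbij.existsUnique f

theorem min_one_mul_add_le {s t ε : ℝ} (hs : 0 ≤ s) (ht : 0 ≤ t) :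
    min 1 ε * (s + t) ≤ s + ε * t :=
  calc min 1 ε * (s + t) = min 1 ε * s + min 1 ε * t := mul_add _ _ _
    _ ≤ 1 * s + ε * t := by gcongr <;> simp
    _ = s + ε * t := by rw [one_mul]

theorem existsUnique_add_smul_apply_eq [CompleteSpace V] {a b : BilinForm ℝ V}
    (ha : a.IsNonneg) (ha_bdd : ∃ C : ℝ, ∀ x y, |a x y| ≤ C * ‖x‖ * ‖y‖)
    (hb : b.IsNonneg) (hb_bdd : ∃ C : ℝ, ∀ x y, |b x y| ≤ C * ‖x‖ * ‖y‖)
    {α : ℝ} (hα : 0 < α) (hcoer : ∀ x, α * ‖x‖ ^ 2 ≤ a x x + b x x)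
    {ε : ℝ} (hε : 0 < ε) (f : V →L[ℝ] ℝ) :
    ∃! u, (a + ε • b) u = (f : V →ₗ[ℝ] ℝ) := by
  obtain ⟨Ca, hCa⟩ := ha_bdd
  obtain ⟨Cb, hCb⟩ := hb_bdd
  let B : V →L[ℝ] V →L[ℝ] ℝ :=
    LinearMap.mkContinuous₂ a Ca hCa + ε • LinearMap.mkContinuous₂ b Cb hCb
  have hB : IsCoercive B := by
    refine ⟨min 1 ε * α, by positivity, fun x => ?_⟩
    calc min 1 ε * α * ‖x‖ * ‖x‖ = min 1 ε * (α * ‖x‖ ^ 2) := by ring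
      _ ≤ min 1 ε * (a x x + b x x) := by gcongr; exact hcoer x
      _ ≤ a x x + ε * b x x := min_one_mul_add_le (ha.nonneg x) (hb.nonneg x)
  have hcoe (u : V) : (a + ε • b) u = f ↔ B u = f := by
    rw [← ContinuousLinearMap.coe_inj]; rfl
  simpa only [hcoe] using existsUnique_apply_eq_of_isCoercive hB f

end LaxMilgram

theorem IsCSPForm.isPosSemidef {V : Type*} [NormedAddCommGroup V]
    [InnerProductSpace ℝ V] {a : BilinForm ℝ V} (ha : IsCSPForm a) : a.IsPosSemidef :=
  ⟨⟨ha.1⟩, ⟨ha.2.1⟩⟩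

theorem three_field_equivalence_general {V : Type*} [NormedAddCommGroup V]
    [InnerProductSpace ℝ V] [CompleteSpace V] {a b c : BilinForm ℝ V}
    (ha : a.IsPosSemidef) (ha_bdd : ∃ C : ℝ, ∀ x y, |a x y| ≤ C * ‖x‖ * ‖y‖)
    (hb : b.IsNonneg) (hb_bdd : ∃ C : ℝ, ∀ x y, |b x y| ≤ C * ‖x‖ * ‖y‖)
    (hc : c.IsPosSemidef) {α : ℝ} (hα : 0 < α) (hcoer : ∀ x, α * ‖x‖ ^ 2 ≤ a x x + b x x)
    {G A : Submodule ℝ V} (hG : G = nullSpace a ha) (hA : A = leftOrthogonal c G)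
    (hGA : IsCompl G A) (ℓ : V →L[ℝ] ℝ) {ε : ℝ} (hε : 0 < ε) :
    (∀ p q l : V, p ∈ G → l ∈ G →
      (IsThreeFieldSolution a b c ℓ ε G p q l ↔ l = 0 ∧ q ∈ A ∧ IsAPSolution a b ℓ ε G A p q)) ∧
    ∃! s : V × V × V, s.1 ∈ G ∧ s.2.2 ∈ G ∧
      IsThreeFieldSolution a b c ℓ ε G s.1 s.2.1 s.2.2 := by
  subst hA
  have hGl : ∀ η ∈ G, ∀ x, a η x = 0 := fun η hη =>
    apply_eq_zero_of_mem_nullSpace ha (hG ▸ hη)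
  have hGr : ∀ η ∈ G, ∀ x, a x η = 0 := fun η hη =>
    apply_eq_zero_of_mem_nullSpace_right ha (hG ▸ hη)
  have hcG : ∀ η ∈ G, c η η = 0 → η = 0 := fun η hη =>
    eq_zero_of_disjoint_leftOrthogonal hc hGA.disjoint hη
  have hAP := existsUnique_isAPSolution hε.ne' hGl hGr hGA
    (existsUnique_add_smul_apply_eq ha.isNonneg ha_bdd hb hb_bdd hα hcoer hε (ε • ℓ))
  exact ⟨fun p q l _ hl => isThreeFieldSolution_iff hGr hcG hGA.codisjoint hl,
    existsUnique_isThreeFieldSolution hGr hcG hGA.codisjoint hAP⟩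

/-- Proposition 2.2: a triple (p,q,l) ∈ G × V × G solves the
three-field problem iff l = 0, q ∈ A, and (p,q) solves the AP formulation;
in particular the three-field problem has a unique solution. -/
theorem three_field_equivalence
    {V : Type*} [NormedAddCommGroup V] [InnerProductSpace ℝ V] [CompleteSpace V]
    (apar aperp c : V →ₗ[ℝ] V →ₗ[ℝ] ℝ)
    (hapar : IsCSPForm apar) (haperp : IsCSPForm aperp) (hc : IsCSPForm c)
    (α : ℝ) (hα : 0 < α)
    (hcoer : ∀ φ : V, α * ‖φ‖ ^ 2 ≤ apar φ φ + aperp φ φ)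
    -- Hypothesis B: bounded projection P onto G along A, V = G ⊕ A
    (P : V →L[ℝ] V)
    (hPG : ∀ φ : V, apar (P φ) (P φ) = 0)
    (hPA : ∀ φ : V, ∀ ψ : V, apar ψ ψ = 0 → c (φ - P φ) ψ = 0)
    (hPid : ∀ φ : V, apar φ φ = 0 → P φ = φ)
    (hPzero : ∀ φ : V, (∀ ψ : V, apar ψ ψ = 0 → c φ ψ = 0) → P φ = 0)
    (ell : V →L[ℝ] ℝ) (F₀ : ℝ) (hF₀ : 0 ≤ F₀)
    (hell : ∀ ψ : V, |ell ψ| ≤ F₀ * Real.sqrt (c ψ ψ))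
    (ε : ℝ) (hε : ε ∈ Set.Ioo (0 : ℝ) 1) :
    (∀ p q lm : V, apar p p = 0 → apar lm lm = 0 →
      (((∀ η : V, apar η η = 0 → aperp p η + aperp q η = ell η) ∧
        (∀ ξ : V, apar q ξ + ε * aperp q ξ + ε * aperp p ξ + c lm ξ = ε * ell ξ) ∧
        (∀ χ : V, apar χ χ = 0 → c q χ = 0))
       ↔ (lm = 0 ∧ (∀ ψ : V, apar ψ ψ = 0 → c q ψ = 0) ∧
          (∀ η : V, apar η η = 0 → aperp p η + aperp q η = ell η) ∧
          (∀ ξ : V, (∀ ψ : V, apar ψ ψ = 0 → c ξ ψ = 0) →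
            apar q ξ + ε * aperp q ξ + ε * aperp p ξ = ε * ell ξ)))) ∧
    (∃! s : V × V × V, apar s.1 s.1 = 0 ∧ apar s.2.2 s.2.2 = 0 ∧
      (∀ η : V, apar η η = 0 → aperp s.1 η + aperp s.2.1 η = ell η) ∧
      (∀ ξ : V, apar s.2.1 ξ + ε * aperp s.2.1 ξ + ε * aperp s.1 ξ
          + c s.2.2 ξ = ε * ell ξ) ∧
      (∀ χ : V, apar χ χ = 0 → c s.2.1 χ = 0)) :=
  three_field_equivalence_general hapar.isPosSemidef hapar.2.2 haperp.isPosSemidef.isNonneg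
    haperp.2.2 hc.isPosSemidef hα hcoer rfl rfl
    (isCompl_of_isProj (P := (P : V →ₗ[ℝ] V)) ⟨hPG, hPid⟩ hPA hPzero) ell hε.1
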